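/- arXiv:2405.13222 — 2 statements merged into one kernel-verified Lean document; each statement's English description precedes it below -/
import Mathlib

section
/- There exists a constant λ₁ > 0 such that for every smooth compactly supported function v ∈ C_c^∞(D), the Poincaré inequality ∫_D |∇_γ v|² dxdy ≥ λ₁ ∫_D |v|² dxdy holds (hence by density it holds for every v in the Sobolev space H₀^{1,γ}(D)). -/
open MeasureTheory Real Set Filter
open scoped ENNReal

noncomputable section

/-- The Baouendi–Grushin space `ℝ^m × ℝ^k`. -/
abbrev GS (m k : ℕ) := EuclideanSpace ℝ (Fin m) × EuclideanSpace ℝ (Fin k)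

/-- Unit coordinate vector in the `i`-th `x`-direction. -/
def eX (m k : ℕ) (i : Fin m) : GS m k := (EuclideanSpace.single i (1 : ℝ), 0)

/-- Unit coordinate vector in the `j`-th `y`-direction. -/
def eY (m k : ℕ) (j : Fin k) : GS m k := (0, EuclideanSpace.single j (1 : ℝ))

/-- Squared length `|∇_γ v|²` of the Baouendi–Grushin gradient
`∇_γ v = (∇_x v, |x|^γ ∇_y v)`. -/
def gradSqG {m k : ℕ} (γ : ℝ) (v : GS m k → ℝ) (z : GS m k) : ℝ :=
  (∑ i, (fderiv ℝ v z (eX m k i)) ^ 2) +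
    ‖z.1‖ ^ (2 * γ) * ∑ j, (fderiv ℝ v z (eY m k j)) ^ 2

/-- Pointwise inner product `∇_γ v · ∇_γ w` of Baouendi–Grushin gradients. -/
def dotG {m k : ℕ} (γ : ℝ) (v w : GS m k → ℝ) (z : GS m k) : ℝ :=
  (∑ i, fderiv ℝ v z (eX m k i) * fderiv ℝ w z (eX m k i)) +
    ‖z.1‖ ^ (2 * γ) * ∑ j, fderiv ℝ v z (eY m k j) * fderiv ℝ w z (eY m k j)

/-- The Baouendi–Grushin operator `Δ_γ v = Δ_x v + |x|^{2γ} Δ_y v`. -/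
def lapG {m k : ℕ} (γ : ℝ) (v : GS m k → ℝ) (z : GS m k) : ℝ :=
  (∑ i, fderiv ℝ (fun w => fderiv ℝ v w (eX m k i)) z (eX m k i)) +
    ‖z.1‖ ^ (2 * γ) * ∑ j, fderiv ℝ (fun w => fderiv ℝ v w (eY m k j)) z (eY m k j)

/-- The antiderivative `F(x) = ∫₀ˣ f(s) ds`. -/
def Fprim (f : ℝ → ℝ) (x : ℝ) : ℝ := ∫ s in (0 : ℝ)..x, f s

/-- A domain as in the paper: bounded, open, connected, and such that `D` minus the
degeneracy set `{(x,y) ∈ closure D : x = 0}` consists of only one connected component. -/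
structure GoodDomain (m k : ℕ) (D : Set (GS m k)) : Prop where
  isOpen : IsOpen D
  isConnected : IsConnected D
  isBounded : Bornology.IsBounded D
  conn_off_degeneracy : IsConnected (D \ {z : GS m k | z ∈ closure D ∧ z.1 = 0})

/-- `D` supports the divergence formula: Green's first identity for `Δ_γ` holds for smooth
functions, the first of which vanishes on `∂D`. -/
def SupportsDivFormula {m k : ℕ} (γ : ℝ) (D : Set (GS m k)) : Prop :=
  ∀ v w : GS m k → ℝ, ContDiff ℝ (⊤ : ℕ∞) v → ContDiff ℝ (⊤ : ℕ∞) w →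
    (∀ z ∈ frontier D, v z = 0) →
    ∫ z in D, v z * lapG γ w z = -∫ z in D, dotG γ v w z

/-- The nonlinearity `f`: locally Lipschitz on `ℝ`, `f(0) = 0`, and `f(u) > 0` for `u > 0`. -/
structure GoodNonlinearity (f : ℝ → ℝ) : Prop where
  locallyLipschitz : LocallyLipschitz f
  zero : f 0 = 0
  pos : ∀ s : ℝ, 0 < s → 0 < f s

/-- The initial datum `u₀`: of class `C¹`, non-negative and non-trivial on `closure D`,
vanishing on `∂D`. -/
structure GoodInitialData {m k : ℕ} (D : Set (GS m k)) (u₀ : GS m k → ℝ) : Prop where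
  contDiff : ContDiff ℝ 1 u₀
  nonneg : ∀ z ∈ closure D, 0 ≤ u₀ z
  nontrivial : ∃ z ∈ D, u₀ z ≠ 0
  bdry : ∀ z ∈ frontier D, u₀ z = 0

/-- A positive classical solution `u` of the pseudo-parabolic problem
`u_t − Δ_γ u_t − Δ_γ u = f(u)` in `D × (0,T)`, `u = 0` on `∂D × (0,T)`, `u(0) = u₀`
on `closure D`, where `T ∈ (0,∞]` is the interval of existence; `u` is smooth enough
that all derivatives exist. -/
structure IsPosSolution {m k : ℕ} (γ : ℝ) (D : Set (GS m k)) (f : ℝ → ℝ)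
    (u₀ : GS m k → ℝ) (T : ℝ≥0∞) (u : ℝ → GS m k → ℝ) : Prop where
  smooth : ContDiff ℝ (⊤ : ℕ∞) (fun p : ℝ × GS m k => u p.1 p.2)
  pos : ∀ t : ℝ, 0 < t → ENNReal.ofReal t < T → ∀ z ∈ D, 0 < u t z
  eqn : ∀ t : ℝ, 0 < t → ENNReal.ofReal t < T → ∀ z ∈ D,
    deriv (fun s => u s z) t
      - lapG γ (fun w => deriv (fun s => u s w) t) z
      - lapG γ (u t) z = f (u t z)
  bdry : ∀ t : ℝ, 0 < t → ENNReal.ofReal t < T → ∀ z ∈ frontier D, u t z = 0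
  init : ∀ z ∈ closure D, u 0 z = u₀ z

/-!
A single horizontal derivative suffices. If `v` vanishes where `|x_i| > R`, integrating
`∂_i (x_i v²)` gives `∫ v² = -2 ∫ x_i v ∂_i v`, and Young's inequality
`-2 x_i v ∂_i v ≤ v² / 2 + 2 R² (∂_i v)²` absorbs half of the left-hand side, leaving
`∫ v² ≤ 4 R² ∫ (∂_i v)²`. Since `(∂_i v)² ≤ |∇_γ v|²` for every `γ`, the constant `1 / (4 R²)`
does not see the degeneracy of the weight `|x|^γ`.
-/

section DirectionalPoincare

lemma abs_mul_le_mul_abs_of_forall_mem_support {α : Type*} {f g : α → ℝ} {R : ℝ}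
    (hfR : ∀ a ∈ Function.support g, |f a| ≤ R) (a : α) : |f a * g a| ≤ R * |g a| := by
  rw [abs_mul]
  by_cases ha : g a = 0
  · simp [ha]
  · exact mul_le_mul_of_nonneg_right (hfR a ha) (abs_nonneg _)

lemma neg_two_mul_mul_le_of_abs_le {a b c R : ℝ} (h : |a| ≤ R * |b|) :
    -2 * (a * c) ≤ 1 / 2 * b ^ 2 + 2 * R ^ 2 * c ^ 2 := calc
  -2 * (a * c) ≤ 2 * (|a| * |c|) := by
    rw [← abs_mul]
    linarith [neg_abs_le (a * c)]
  _ ≤ 2 * (R * |b| * |c|) := by gcongr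
  _ ≤ 1 / 2 * |b| ^ 2 + 2 * R ^ 2 * |c| ^ 2 := by nlinarith [sq_nonneg (|b| - 2 * R * |c|)]
  _ = 1 / 2 * b ^ 2 + 2 * R ^ 2 * c ^ 2 := by simp only [sq_abs]

variable {E : Type*} [NormedAddCommGroup E] [NormedSpace ℝ E] [FiniteDimensional ℝ E]
  [MeasurableSpace E] [BorelSpace E] {μ : Measure E} [μ.IsAddHaarMeasure] {v : E → ℝ}
  {L : E →L[ℝ] ℝ} {e : E}

lemma integral_sq_eq_neg_two_mul_integral_clm_mul_mul_fderiv (hLe : L e = 1)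
    (hv : Differentiable ℝ v) (hv2 : MemLp v 2 μ) (hLv : MemLp (fun z ↦ L z * v z) 2 μ)
    (hdv : MemLp (fun z ↦ fderiv ℝ v z e) 2 μ) :
    ∫ z, v z ^ 2 ∂μ = -2 * ∫ z, L z * v z * fderiv ℝ v z e ∂μ := by
  have fderiv_sq (z : E) :
      L z * fderiv ℝ (fun w ↦ v w ^ 2) z e = 2 * (L z * v z * fderiv ℝ v z e) := by
    rw [fderiv_fun_pow 2 (hv z)]
    simp only [Nat.add_one_sub_one, pow_one, nsmul_eq_mul, Nat.cast_ofNat, smul_apply,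
      smul_eq_mul]
    ring
  have by_parts := integral_mul_fderiv_eq_neg_fderiv_mul_of_integrable (μ := μ) (f := L)
    (g := fun z ↦ v z ^ 2) (v := e)
    (by simpa [hLe] using hv2.integrable_sq)
    (by simpa only [fderiv_sq] using! (hLv.integrable_mul hdv).const_mul 2)
    (by simpa only [sq, ← mul_assoc] using! hLv.integrable_mul hv2)
    (fun z _ ↦ L.differentiableAt) (fun z _ ↦ (hv z).pow 2)
  simp only [fderiv_sq, integral_const_mul, ContinuousLinearMap.fderiv, hLe, one_mul] at by_parts
  linarith

theorem integral_sq_le_mul_integral_sq_fderiv {R : ℝ} (hLe : L e = 1)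
    (hLR : ∀ z ∈ Function.support v, |L z| ≤ R) (hv : Differentiable ℝ v) (hv2 : MemLp v 2 μ)
    (hdv : MemLp (fun z ↦ fderiv ℝ v z e) 2 μ) :
    ∫ z, v z ^ 2 ∂μ ≤ 4 * R ^ 2 * ∫ z, fderiv ℝ v z e ^ 2 ∂μ := by
  have abs_le (z : E) : |L z * v z| ≤ R * |v z| := abs_mul_le_mul_abs_of_forall_mem_support hLR z
  have hLv : MemLp (fun z ↦ L z * v z) 2 μ :=
    hv2.of_le_mul (L.continuous.mul hv.continuous).aestronglyMeasurable (ae_of_all _ abs_le)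
  have le_half_add : ∫ z, v z ^ 2 ∂μ ≤
      1 / 2 * ∫ z, v z ^ 2 ∂μ + 2 * R ^ 2 * ∫ z, fderiv ℝ v z e ^ 2 ∂μ := calc
    ∫ z, v z ^ 2 ∂μ = ∫ z, -2 * (L z * v z * fderiv ℝ v z e) ∂μ := by
      rw [integral_const_mul,
        integral_sq_eq_neg_two_mul_integral_clm_mul_mul_fderiv hLe hv hv2 hLv hdv]
    _ ≤ ∫ z, (1 / 2 * v z ^ 2 + 2 * R ^ 2 * fderiv ℝ v z e ^ 2) ∂μ :=
      integral_mono ((hLv.integrable_mul hdv).const_mul _)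
        ((hv2.integrable_sq.const_mul _).add (hdv.integrable_sq.const_mul _))
        fun z ↦ neg_two_mul_mul_le_of_abs_le (abs_le z)
    _ = _ := by
      rw [integral_add (hv2.integrable_sq.const_mul _) (hdv.integrable_sq.const_mul _),
        integral_const_mul, integral_const_mul]
  linarith

end DirectionalPoincare

section GrushinGradient

variable {m k : ℕ} {γ : ℝ} {v : GS m k → ℝ}

/-- The coordinate functional `(x, y) ↦ x_i`, which serves as the multiplier when integrating by
parts in the direction `eX m k i`. -/
def xCoord (m k : ℕ) (i : Fin m) : GS m k →L[ℝ] ℝ :=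
  (EuclideanSpace.proj i).comp (ContinuousLinearMap.fst ℝ _ _)

lemma xCoord_eX (i : Fin m) : xCoord m k i (eX m k i) = 1 := by
  simp [xCoord, eX]

lemma sq_fderiv_eX_le_gradSqG (γ : ℝ) (v : GS m k → ℝ) (z : GS m k) (i : Fin m) :
    fderiv ℝ v z (eX m k i) ^ 2 ≤ gradSqG γ v z := calc
  fderiv ℝ v z (eX m k i) ^ 2 ≤ ∑ j, fderiv ℝ v z (eX m k j) ^ 2 :=
    Finset.single_le_sum (f := fun j ↦ fderiv ℝ v z (eX m k j) ^ 2)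
      (fun _ _ ↦ sq_nonneg _) (Finset.mem_univ i)
  _ ≤ gradSqG γ v z := le_add_of_nonneg_right (by positivity)

lemma gradSqG_eq_zero_of_notMem_tsupport {z : GS m k} (hz : z ∉ tsupport v) :
    gradSqG γ v z = 0 := by
  simp [gradSqG, fderiv_of_notMem_tsupport ℝ hz]

lemma continuous_gradSqG (hγ : 0 ≤ γ) (hv : ContDiff ℝ 1 v) : Continuous (gradSqG γ v) := by
  have continuous_partial (e : GS m k) : Continuous fun z ↦ fderiv ℝ v z e :=
    (hv.continuous_fderiv one_ne_zero).clm_apply continuous_const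
  have continuous_weight : Continuous fun z : GS m k ↦ ‖z.1‖ ^ (2 * γ) :=
    continuous_fst.norm.rpow_const fun _ ↦ Or.inr (by positivity)
  exact (continuous_finsetSum _ fun i _ ↦ (continuous_partial _).pow 2).add
    (continuous_weight.mul (continuous_finsetSum _ fun j _ ↦ (continuous_partial _).pow 2))

lemma integrable_gradSqG (hγ : 0 ≤ γ) (hv : ContDiff ℝ 1 v) (hcs : HasCompactSupport v) :
    Integrable (gradSqG γ v) :=
  (continuous_gradSqG hγ hv).integrable_of_hasCompactSupport
    (.intro hcs fun _ ↦ gradSqG_eq_zero_of_notMem_tsupport)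

lemma memLp_fderiv_eX_of_integrable_gradSqG (hg : Integrable (gradSqG γ v)) (i : Fin m) :
    MemLp (fun z ↦ fderiv ℝ v z (eX m k i)) 2 := by
  have hmeas : Measurable fun z ↦ fderiv ℝ v z (eX m k i) := measurable_fderiv_apply_const ℝ v _
  refine (memLp_two_iff_integrable_sq hmeas.aestronglyMeasurable).2
    (hg.mono' (hmeas.pow_const 2).aestronglyMeasurable (ae_of_all _ fun z ↦ ?_))
  rw [norm_of_nonneg (sq_nonneg _)]
  exact sq_fderiv_eX_le_gradSqG γ v z i

instance instIsAddHaarMeasureVolumeGS : (volume : Measure (GS m k)).IsAddHaarMeasure :=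
  Measure.prod.instIsAddHaarMeasure _ _

theorem integral_sq_le_mul_integral_gradSqG {R : ℝ} (i : Fin m)
    (hR : ∀ z ∈ Function.support v, |xCoord m k i z| ≤ R) (hv : Differentiable ℝ v)
    (hv2 : MemLp v 2) (hg : Integrable (gradSqG γ v)) :
    ∫ z, v z ^ 2 ≤ 4 * R ^ 2 * ∫ z, gradSqG γ v z := by
  have hdv := memLp_fderiv_eX_of_integrable_gradSqG hg i
  calc
    ∫ z, v z ^ 2 ≤ 4 * R ^ 2 * ∫ z, fderiv ℝ v z (eX m k i) ^ 2 :=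
      integral_sq_le_mul_integral_sq_fderiv (xCoord_eX i) hR hv hv2 hdv
    _ ≤ 4 * R ^ 2 * ∫ z, gradSqG γ v z := by
      gcongr ?_ * ?_
      exact integral_mono hdv.integrable_sq hg fun z ↦ sq_fderiv_eX_le_gradSqG γ v z i

end GrushinGradient

theorem grushin_poincare_inequality_general {m k : ℕ} (i : Fin m) {D : Set (GS m k)}
    (hD : Bornology.IsBounded (xCoord m k i '' D)) :
    ∃ lam1 : ℝ, 0 < lam1 ∧
      ∀ (γ : ℝ) (v : GS m k → ℝ), Differentiable ℝ v → tsupport v ⊆ D → MemLp v 2 →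
        Integrable (gradSqG γ v) →
          lam1 * ∫ z in D, v z ^ 2 ≤ ∫ z in D, gradSqG γ v z := by
  obtain ⟨R, hR_pos, hR⟩ := hD.exists_pos_norm_le
  refine ⟨1 / (4 * R ^ 2), by positivity, fun γ v hv hvD hv2 hg ↦ ?_⟩
  have notMem_tsupport {z : GS m k} (hz : z ∉ D) : z ∉ tsupport v := fun h ↦ hz (hvD h)
  rw [setIntegral_eq_integral_of_forall_compl_eq_zero fun z hz ↦ by
      simp [image_eq_zero_of_notMem_tsupport (notMem_tsupport hz)],
    setIntegral_eq_integral_of_forall_compl_eq_zero fun z hz ↦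
      gradSqG_eq_zero_of_notMem_tsupport (notMem_tsupport hz),
    one_div, inv_mul_le_iff₀ (by positivity)]
  exact integral_sq_le_mul_integral_gradSqG i
    (fun z hz ↦ hR _ (mem_image_of_mem _ (hvD (subset_tsupport v hz)))) hv hv2 hg

/-- **Poincaré inequality for the Baouendi–Grushin operator** (Lemma from \[SY20\]):
there exists a constant `λ₁ > 0` such that
`∫_D |∇_γ v|² ≥ λ₁ ∫_D |v|²` for every `v ∈ C_c^∞(D)`
(hence, by density, for every `v` in the Sobolev space `H₀^{1,γ}(D)`). -/
theorem grushin_poincare_inequality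
    (m k : ℕ) (hm : 1 ≤ m) (hk : 1 ≤ k) (γ : ℝ) (hγ : 0 ≤ γ)
    (D : Set (GS m k)) (hD : GoodDomain m k D) (hDiv : SupportsDivFormula γ D) :
    ∃ lam1 : ℝ, 0 < lam1 ∧
      ∀ v : GS m k → ℝ, ContDiff ℝ (⊤ : ℕ∞) v → HasCompactSupport v → tsupport v ⊆ D →
        lam1 * ∫ z in D, (v z) ^ 2 ≤ ∫ z in D, gradSqG γ v z := by
  obtain ⟨lam1, lam1_pos, poincare⟩ := grushin_poincare_inequality_general ⟨0, hm⟩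
    ((xCoord m k ⟨0, hm⟩).lipschitz.isBounded_image hD.isBounded)
  exact ⟨lam1, lam1_pos, fun v hv hcs hvD ↦ poincare γ v (hv.differentiable (by simp)) hvD
    (hv.continuous.memLp_of_hasCompactSupport hcs)
    (integrable_gradSqG hγ (hv.of_le (by simp)) hcs)⟩

end
end

section
/- Let u be a positive classical solution of the pseudo-parabolic problem, and for θ ∈ ℝ define the energy functional 𝓕(t) := −(1/2)∫_D |∇_γ u(x,y,t)|² dxdy + ∫_D (F(u(x,y,t)) − θ) dxdy, where F(u) := ∫₀^u f(s) ds. Then for all t ≥ 0 in the interval of existence, 𝓕(t) = 𝓕(0) + ∫₀^t ∫_D (u_τ² + |∇_γ u_τ|²) dxdy dτ; in particular, 𝓕 is non-decreasing in t. -/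
open MeasureTheory Real Set Filter
open scoped ENNReal

noncomputable section

/-!
Test the equation with `u_t`. As `u` vanishes on `∂D` throughout an open time interval, so does
`u_t`, and Green's identity, applied to the pairs `(u_t, u_t)` and `(u_t, u)`, turns the equation
into `∫_D f(u) u_t - ∫_D ∇_γ u_t · ∇_γ u = ∫_D (u_t² + |∇_γ u_t|²)`. Differentiating under the
integral sign and exchanging `∂_t` with `∇_γ` shows that the left-hand side is the time derivative
of the energy. The equation is only available at interior times, but the energy is continuous up
to the endpoints, so the fundamental theorem of calculus gives the identity on the closed interval.
-/

open Function (uncurry)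
open scoped Topology

section BoundedSet

variable {X F : Type*} [PseudoMetricSpace X] [ProperSpace X] [MeasurableSpace X]
  [OpensMeasurableSpace X] [NormedAddCommGroup F] {μ : Measure X} [IsFiniteMeasureOnCompacts μ]
  {D : Set X}

lemma integrableOn_of_continuous_of_isBounded (hD : Bornology.IsBounded D) {g : X → F}
    (hg : Continuous g) : IntegrableOn g D μ :=
  (hg.continuousOn.integrableOn_compact' hD.isCompact_closure
    isClosed_closure.measurableSet).mono_set subset_closure

variable [NormedSpace ℝ F]

lemma continuous_setIntegral_of_isBounded (hD : Bornology.IsBounded D) {g : ℝ → X → F}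
    (hg : Continuous (uncurry g)) : Continuous fun t => ∫ z in D, g t z ∂μ := by
  have restrict_closure : (μ.restrict D).restrict (closure D) = μ.restrict D := by
    rw [Measure.restrict_restrict isClosed_closure.measurableSet,
      inter_eq_right.2 subset_closure]
  simpa only [restrict_closure] using
    continuous_parametric_integral_of_continuous (μ := μ.restrict D) hg hD.isCompact_closure

lemma hasDerivAt_setIntegral_of_isBounded (hD : Bornology.IsBounded D) {g g' : ℝ → X → F}
    (hg : ∀ t, Continuous (g t)) (hg' : Continuous (uncurry g'))
    (hderiv : ∀ t z, HasDerivAt (fun s => g s z) (g' t z) t) (t : ℝ) :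
    HasDerivAt (fun s => ∫ z in D, g s z ∂μ) (∫ z in D, g' t z ∂μ) t := by
  obtain ⟨C, hC⟩ := ((isCompact_closedBall t 1).prod
    hD.isCompact_closure).exists_bound_of_continuousOn hg'.continuousOn
  have bound_closure : ∀ᵐ z ∂μ.restrict (closure D),
      ∀ s ∈ Metric.closedBall t 1, ‖g' s z‖ ≤ C :=
    ae_restrict_of_forall_mem isClosed_closure.measurableSet fun z hz s hs => hC (s, z) ⟨hs, hz⟩
  exact (hasDerivAt_integral_of_dominated_loc_of_deriv_le
    (Metric.closedBall_mem_nhds t one_pos)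
    (.of_forall fun s => (hg s).aestronglyMeasurable)
    (integrableOn_of_continuous_of_isBounded hD (hg t))
    (hg'.uncurry_left t).aestronglyMeasurable
    (ae_mono (Measure.restrict_mono subset_closure le_rfl) bound_closure)
    (integrableOn_of_continuous_of_isBounded hD continuous_const)
    (.of_forall fun z s _ => hderiv s z)).2

end BoundedSet

section TimeDeriv

/-- The time derivative `u_t` of a function of time and space. -/
def timeDeriv {X F : Type*} [NormedAddCommGroup F] [NormedSpace ℝ F] (u : ℝ → X → F)
    (t : ℝ) (z : X) : F :=
  deriv (fun s => u s z) t

lemma timeDeriv_eq_zero_of_mem_nhds {X F : Type*} [NormedAddCommGroup F] [NormedSpace ℝ F]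
    {u : ℝ → X → F} {I : Set ℝ} {t : ℝ} {z : X} (hI : I ∈ 𝓝 t) (hu : ∀ s ∈ I, u s z = 0) :
    timeDeriv u t z = 0 := by
  have eventually_zero : (fun s => u s z) =ᶠ[𝓝 t] fun _ => 0 := eventually_of_mem hI hu
  rw [timeDeriv, eventually_zero.deriv_eq, deriv_const]

variable {E F : Type*} [NormedAddCommGroup E] [NormedSpace ℝ E] [NormedAddCommGroup F]
  [NormedSpace ℝ F] {u : ℝ → E → F} {t : ℝ} {z : E}

lemma contDiff_slice {n : WithTop ℕ∞} (hu : ContDiff ℝ n (uncurry u)) (t : ℝ) :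
    ContDiff ℝ n (u t) :=
  hu.comp (contDiff_prodMk_right t)

lemma hasDerivAt_uncurry_left (hu : DifferentiableAt ℝ (uncurry u) (t, z)) :
    HasDerivAt (fun s => u s z) (fderiv ℝ (uncurry u) (t, z) (1, 0)) t :=
  hu.hasFDerivAt.comp_hasDerivAt_of_eq t ((hasDerivAt_id t).prodMk (hasDerivAt_const t z)) rfl

lemma timeDeriv_eq_fderiv_uncurry (hu : DifferentiableAt ℝ (uncurry u) (t, z)) :
    timeDeriv u t z = fderiv ℝ (uncurry u) (t, z) (1, 0) :=
  (hasDerivAt_uncurry_left hu).deriv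

lemma hasDerivAt_timeDeriv (hu : DifferentiableAt ℝ (uncurry u) (t, z)) :
    HasDerivAt (fun s => u s z) (timeDeriv u t z) t :=
  (hasDerivAt_uncurry_left hu).differentiableAt.hasDerivAt

lemma uncurry_timeDeriv (hu : Differentiable ℝ (uncurry u)) :
    uncurry (timeDeriv u) = fun p => fderiv ℝ (uncurry u) p (1, 0) :=
  funext fun p => timeDeriv_eq_fderiv_uncurry (hu p)

lemma contDiff_uncurry_timeDeriv {n n' : WithTop ℕ∞} (hu : ContDiff ℝ n (uncurry u))
    (hn : n' + 1 ≤ n) : ContDiff ℝ n' (uncurry (timeDeriv u)) := by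
  have one_le : 1 ≤ n := le_add_self.trans hn
  rw [uncurry_timeDeriv (hu.differentiable (one_pos.trans_le one_le).ne')]
  exact (hu.fderiv_right hn).clm_apply contDiff_const

lemma fderiv_slice_apply (hu : DifferentiableAt ℝ (uncurry u) (t, z)) (e : E) :
    fderiv ℝ (u t) z e = fderiv ℝ (uncurry u) (t, z) (0, e) := by
  have slice : HasFDerivAt (u t) _ z := hu.hasFDerivAt.comp z (hasFDerivAt_prodMk_right t z)
  simp [slice.fderiv]

lemma fderiv_fderiv_apply_const {G : Type*} [NormedAddCommGroup G] [NormedSpace ℝ G] {U : G → F}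
    {p : G} (hU : DifferentiableAt ℝ (fderiv ℝ U) p) (v w : G) :
    fderiv ℝ (fun q => fderiv ℝ U q v) p w = fderiv ℝ (fderiv ℝ U) p w v := by
  simp [fderiv_clm_apply hU (differentiableAt_const v)]

lemma hasDerivAt_fderiv_slice_apply (hu : ContDiff ℝ 2 (uncurry u)) (t : ℝ) (z e : E) :
    HasDerivAt (fun s => fderiv ℝ (u s) z e) (fderiv ℝ (timeDeriv u t) z e) t := by
  have diff : Differentiable ℝ (uncurry u) := hu.differentiable two_ne_zero
  have diff_fderiv : Differentiable ℝ (fderiv ℝ (uncurry u)) :=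
    (hu.fderiv_right (m := 1) one_add_one_eq_two.le).differentiable one_ne_zero
  have diff_timeDeriv : Differentiable ℝ (uncurry (timeDeriv u)) :=
    (contDiff_uncurry_timeDeriv (n' := 1) hu one_add_one_eq_two.le).differentiable one_ne_zero
  have symm : IsSymmSndFDerivAt ℝ (uncurry u) (t, z) :=
    hu.contDiffAt.isSymmSndFDerivAt (by simp)
  have mixed : fderiv ℝ (timeDeriv u t) z e =
      fderiv ℝ (fun p => fderiv ℝ (uncurry u) p (0, e)) (t, z) (1, 0) := by
    rw [fderiv_slice_apply (diff_timeDeriv _), uncurry_timeDeriv diff,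
      fderiv_fderiv_apply_const (diff_fderiv _), fderiv_fderiv_apply_const (diff_fderiv _),
      symm.eq]
  simp only [mixed, fderiv_slice_apply (diff _)]
  exact hasDerivAt_uncurry_left (u := fun s w => fderiv ℝ (uncurry u) (s, w) (0, e))
    ((diff_fderiv _).clm_apply (differentiableAt_const _))

lemma continuous_fderiv_slice_apply (hu : ContDiff ℝ 1 (uncurry u)) (e : E) :
    Continuous fun p : ℝ × E => fderiv ℝ (u p.1) p.2 e := by
  simp only [fderiv_slice_apply (hu.differentiable one_ne_zero _)]
  exact (hu.continuous_fderiv one_ne_zero).clm_apply continuous_const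

end TimeDeriv

section Grushin

variable {m k : ℕ} {γ : ℝ}

lemma continuous_norm_fst_rpow (hγ : 0 ≤ γ) :
    Continuous fun z : GS m k => ‖z.1‖ ^ (2 * γ) :=
  continuous_fst.norm.rpow_const fun _ => Or.inr (by positivity)

lemma gradSqG_eq_dotG (γ : ℝ) (v : GS m k → ℝ) (z : GS m k) :
    gradSqG γ v z = dotG γ v v z := by
  simp only [gradSqG, dotG, pow_two]

lemma gradSqG_nonneg (γ : ℝ) (v : GS m k → ℝ) (z : GS m k) : 0 ≤ gradSqG γ v z := by
  unfold gradSqG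
  positivity

lemma continuous_lapG (hγ : 0 ≤ γ) {v : GS m k → ℝ} (hv : ContDiff ℝ 2 v) :
    Continuous (lapG γ v) := by
  have second_deriv (e : GS m k) : Continuous fun z => fderiv ℝ (fun w => fderiv ℝ v w e) z e :=
    have first_deriv : ContDiff ℝ 1 fun w => fderiv ℝ v w e :=
      (hv.fderiv_right one_add_one_eq_two.le).clm_apply contDiff_const
    (first_deriv.continuous_fderiv one_ne_zero).clm_apply continuous_const
  exact (continuous_finsetSum _ fun i _ => second_deriv _).add
    ((continuous_norm_fst_rpow hγ).mul (continuous_finsetSum _ fun j _ => second_deriv _))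

variable {u v : ℝ → GS m k → ℝ}

lemma continuous_uncurry_dotG (hγ : 0 ≤ γ) (hu : ContDiff ℝ 1 (uncurry u))
    (hv : ContDiff ℝ 1 (uncurry v)) : Continuous (uncurry fun t => dotG γ (u t) (v t)) := by
  have product (e : GS m k) : Continuous fun p : ℝ × GS m k =>
      fderiv ℝ (u p.1) p.2 e * fderiv ℝ (v p.1) p.2 e :=
    (continuous_fderiv_slice_apply hu e).mul (continuous_fderiv_slice_apply hv e)
  exact (continuous_finsetSum _ fun i _ => product _).add
    (((continuous_norm_fst_rpow hγ).comp continuous_snd).mul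
      (continuous_finsetSum _ fun j _ => product _))

lemma continuous_uncurry_gradSqG (hγ : 0 ≤ γ) (hu : ContDiff ℝ 1 (uncurry u)) :
    Continuous (uncurry fun t => gradSqG γ (u t)) := by
  simpa only [funext (gradSqG_eq_dotG γ _)] using continuous_uncurry_dotG hγ hu hu

lemma hasDerivAt_gradSqG (γ : ℝ) (hu : ContDiff ℝ 2 (uncurry u)) (t : ℝ) (z : GS m k) :
    HasDerivAt (fun s => gradSqG γ (u s) z) (2 * dotG γ (timeDeriv u t) (u t) z) t := by
  have square (e : GS m k) : HasDerivAt (fun s => fderiv ℝ (u s) z e ^ 2)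
      (2 * (fderiv ℝ (timeDeriv u t) z e * fderiv ℝ (u t) z e)) t :=
    ((hasDerivAt_fderiv_slice_apply hu t z e).fun_pow 2).congr_deriv (by push_cast; ring)
  refine ((HasDerivAt.fun_sum fun i _ => square (eX m k i)).add
    ((HasDerivAt.fun_sum fun j _ => square (eY m k j)).const_mul (‖z.1‖ ^ (2 * γ)))).congr_deriv ?_
  simp only [dotG, ← Finset.mul_sum]
  ring

end Grushin

section Primitive

variable {f : ℝ → ℝ}

lemma hasDerivAt_Fprim (hf : Continuous f) (x : ℝ) : HasDerivAt (Fprim f) (f x) x :=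
  hf.integral_hasStrictDerivAt 0 x |>.hasDerivAt

lemma continuous_Fprim (hf : Continuous f) : Continuous (Fprim f) :=
  continuous_iff_continuousAt.2 fun x => (hasDerivAt_Fprim hf x).continuousAt

end Primitive

section Energy

variable {m k : ℕ} {γ : ℝ} {D : Set (GS m k)} {f : ℝ → ℝ} {u : ℝ → GS m k → ℝ}

/-- The energy `-(1/2) ∫_D |∇_γ v|² + ∫_D (F(v) - θ)` of a state `v`; the functional `𝓕(t)` is
its value at `u(t)`. -/
def energy (γ : ℝ) (D : Set (GS m k)) (f : ℝ → ℝ) (θ : ℝ) (v : GS m k → ℝ) : ℝ :=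
  -(1 / 2) * (∫ z in D, gradSqG γ v z) + ∫ z in D, (Fprim f (v z) - θ)

/-- The integral `∫_D (w² + |∇_γ w|²)`, which for `w = u_t` is the rate of growth of the energy
along a solution `u`. -/
def energyRate (γ : ℝ) (D : Set (GS m k)) (w : GS m k → ℝ) : ℝ :=
  ∫ z in D, (w z ^ 2 + gradSqG γ w z)

/-- Smooth solutions, of arbitrary sign and without initial condition, of
`u_t - Δ_γ u_t - Δ_γ u = f(u)` in `D` with `u = 0` on `∂D`, for times in `I`. As in
`IsPosSolution`, smoothness is required on all of space-time, so that the values of `u` at the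
endpoints of `I` are meaningful. -/
structure IsSmoothSolutionOn (γ : ℝ) (D : Set (GS m k)) (f : ℝ → ℝ) (I : Set ℝ)
    (u : ℝ → GS m k → ℝ) : Prop where
  smooth : ContDiff ℝ (⊤ : ℕ∞) (uncurry u)
  eqn : ∀ t ∈ I, ∀ z ∈ D, timeDeriv u t z - lapG γ (timeDeriv u t) z - lapG γ (u t) z = f (u t z)
  bdry : ∀ t ∈ I, ∀ z ∈ frontier D, u t z = 0

lemma IsPosSolution.isSmoothSolutionOn_Ioo {u₀ : GS m k → ℝ} {T : ℝ≥0∞} {a b : ℝ}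
    (hu : IsPosSolution γ D f u₀ T u) (ha : 0 ≤ a) (hb : ENNReal.ofReal b < T) :
    IsSmoothSolutionOn γ D f (Ioo a b) u :=
  have lt_T {t : ℝ} (ht : t ∈ Ioo a b) : ENNReal.ofReal t < T :=
    (ENNReal.ofReal_le_ofReal ht.2.le).trans_lt hb
  { smooth := hu.smooth
    eqn := fun t ht => hu.eqn t (ha.trans_lt ht.1) (lt_T ht)
    bdry := fun t ht => hu.bdry t (ha.trans_lt ht.1) (lt_T ht) }

lemma energyRate_nonneg (γ : ℝ) (D : Set (GS m k)) (w : GS m k → ℝ) : 0 ≤ energyRate γ D w :=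
  integral_nonneg fun z => add_nonneg (sq_nonneg _) (gradSqG_nonneg γ w z)

lemma continuous_energyRate (hγ : 0 ≤ γ) (hD : Bornology.IsBounded D)
    {w : ℝ → GS m k → ℝ} (hw : ContDiff ℝ 1 (uncurry w)) :
    Continuous fun t => energyRate γ D (w t) :=
  continuous_setIntegral_of_isBounded hD
    ((hw.continuous.pow 2).add (continuous_uncurry_gradSqG hγ hw))

lemma hasDerivAt_energy (hγ : 0 ≤ γ) (hD : Bornology.IsBounded D) (hf : Continuous f) (θ : ℝ)
    (hu : ContDiff ℝ 2 (uncurry u)) (t : ℝ) :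
    HasDerivAt (fun s => energy γ D f θ (u s))
      ((∫ z in D, f (u t z) * timeDeriv u t z) - ∫ z in D, dotG γ (timeDeriv u t) (u t) z) t := by
  have hu₁ : ContDiff ℝ 1 (uncurry u) := hu.of_le one_le_two
  have hut : ContDiff ℝ 1 (uncurry (timeDeriv u)) :=
    contDiff_uncurry_timeDeriv hu one_add_one_eq_two.le
  have gradient_part : HasDerivAt (fun s => ∫ z in D, gradSqG γ (u s) z)
      (∫ z in D, 2 * dotG γ (timeDeriv u t) (u t) z) t :=
    hasDerivAt_setIntegral_of_isBounded hD
      (fun s => (continuous_uncurry_gradSqG hγ hu₁).uncurry_left s)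
      (g' := fun s z => 2 * dotG γ (timeDeriv u s) (u s) z)
      ((continuous_uncurry_dotG hγ hut hu₁).const_mul 2) (hasDerivAt_gradSqG γ hu) t
  have potential_part : HasDerivAt (fun s => ∫ z in D, (Fprim f (u s z) - θ))
      (∫ z in D, f (u t z) * timeDeriv u t z) t :=
    hasDerivAt_setIntegral_of_isBounded hD
      (fun s => ((continuous_Fprim hf).comp (hu.continuous.uncurry_left s)).sub continuous_const)
      (g' := fun s z => f (u s z) * timeDeriv u s z)
      ((hf.comp hu.continuous).mul hut.continuous)
      (fun s z => ((hasDerivAt_Fprim hf (u s z)).comp s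
        (hasDerivAt_timeDeriv (hu.differentiable two_ne_zero _))).sub_const θ) t
  refine ((gradient_part.const_mul (-(1 / 2))).add potential_part).congr_deriv ?_
  rw [integral_const_mul]
  ring

lemma integral_mul_sub_integral_dotG_eq_energyRate (hγ : 0 ≤ γ) (hDm : MeasurableSet D)
    (hDb : Bornology.IsBounded D) (hDiv : SupportsDivFormula γ D) {v w g : GS m k → ℝ}
    (hv : ContDiff ℝ (⊤ : ℕ∞) v) (hw : ContDiff ℝ (⊤ : ℕ∞) w) (hbdry : ∀ z ∈ frontier D, w z = 0)
    (heqn : ∀ z ∈ D, w z - lapG γ w z - lapG γ v z = g z) :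
    (∫ z in D, g z * w z) - ∫ z in D, dotG γ w v z = energyRate γ D w := by
  have integrable {h : GS m k → ℝ} (hh : Continuous h) : IntegrableOn h D :=
    integrableOn_of_continuous_of_isBounded hDb hh
  have int_sq : IntegrableOn (fun z => w z ^ 2) D := integrable (hw.continuous.pow 2)
  have int_lap {h : GS m k → ℝ} (hh : ContDiff ℝ (⊤ : ℕ∞) h) :
      IntegrableOn (fun z => w z * lapG γ h z) D :=
    integrable (hw.continuous.mul (continuous_lapG hγ (hh.of_le ENat.LEInfty.out)))
  have int_sq_sub_lap : IntegrableOn (fun z => w z ^ 2 - w z * lapG γ w z) D :=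
    int_sq.sub (int_lap hw)
  have int_grad : IntegrableOn (gradSqG γ w) D :=
    integrable ((continuous_uncurry_gradSqG (u := fun _ => w) hγ
      ((hw.of_le ENat.LEInfty.out).comp contDiff_snd)).uncurry_left 0)
  have tested : ∫ z in D, g z * w z =
      ∫ z in D, (w z ^ 2 - w z * lapG γ w z - w z * lapG γ v z) :=
    setIntegral_congr_fun hDm fun z hz => by
      simp only [← heqn z hz]
      ring
  calc (∫ z in D, g z * w z) - ∫ z in D, dotG γ w v z
      = (∫ z in D, w z ^ 2) - (∫ z in D, w z * lapG γ w z) - (∫ z in D, w z * lapG γ v z)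
          - ∫ z in D, dotG γ w v z := by
        rw [tested, integral_sub int_sq_sub_lap (int_lap hv), integral_sub int_sq (int_lap hw)]
    _ = (∫ z in D, w z ^ 2) + ∫ z in D, gradSqG γ w z := by
        rw [hDiv w w hw hw hbdry, hDiv w v hw hv hbdry, funext (gradSqG_eq_dotG γ w)]
        ring
    _ = energyRate γ D w := (integral_add int_sq int_grad).symm

lemma IsSmoothSolutionOn.hasDerivAt_energy {I : Set ℝ} {t : ℝ}
    (hu : IsSmoothSolutionOn γ D f I u) (hI : I ∈ 𝓝 t) (hγ : 0 ≤ γ) (hDm : MeasurableSet D)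
    (hDb : Bornology.IsBounded D) (hDiv : SupportsDivFormula γ D) (hf : Continuous f) (θ : ℝ) :
    HasDerivAt (fun s => energy γ D f θ (u s)) (energyRate γ D (timeDeriv u t)) t := by
  have timeDeriv_bdry : ∀ z ∈ frontier D, timeDeriv u t z = 0 := fun z hz =>
    timeDeriv_eq_zero_of_mem_nhds hI fun s hs => hu.bdry s hs z hz
  refine (_root_.hasDerivAt_energy hγ hDb hf θ (hu.smooth.of_le ENat.LEInfty.out) t).congr_deriv ?_
  exact integral_mul_sub_integral_dotG_eq_energyRate hγ hDm hDb hDiv (contDiff_slice hu.smooth t)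
    (contDiff_slice (contDiff_uncurry_timeDeriv hu.smooth le_rfl) t) timeDeriv_bdry
    (hu.eqn t (mem_of_mem_nhds hI))

end Energy

theorem grushin_energy_identity_general {m k : ℕ} {γ : ℝ} (hγ : 0 ≤ γ) {D : Set (GS m k)}
    (hDm : MeasurableSet D) (hDb : Bornology.IsBounded D) (hDiv : SupportsDivFormula γ D)
    {f : ℝ → ℝ} (hf : Continuous f) (θ : ℝ) {u : ℝ → GS m k → ℝ} {a b : ℝ} (hab : a ≤ b)
    (hu : IsSmoothSolutionOn γ D f (Ioo a b) u) :
    energy γ D f θ (u b) =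
        energy γ D f θ (u a) + ∫ τ in a..b, energyRate γ D (timeDeriv u τ) ∧
      energy γ D f θ (u a) ≤ energy γ D f θ (u b) := by
  have hu₂ : ContDiff ℝ 2 (uncurry u) := hu.smooth.of_le ENat.LEInfty.out
  have energy_continuous : Continuous fun t => energy γ D f θ (u t) :=
    continuous_iff_continuousAt.2 fun t =>
      (hasDerivAt_energy hγ hDb hf θ hu₂ t).continuousAt
  have rate_continuous : Continuous fun t => energyRate γ D (timeDeriv u t) :=
    continuous_energyRate hγ hDb (contDiff_uncurry_timeDeriv hu₂ one_add_one_eq_two.le)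
  have integral_rate : ∫ τ in a..b, energyRate γ D (timeDeriv u τ) =
      energy γ D f θ (u b) - energy γ D f θ (u a) :=
    intervalIntegral.integral_eq_sub_of_hasDerivAt_of_le hab energy_continuous.continuousOn
      (fun t ht => hu.hasDerivAt_energy (Ioo_mem_nhds ht.1 ht.2) hγ hDm hDb hDiv hf θ)
      (rate_continuous.intervalIntegrable a b)
  have integral_nonneg : 0 ≤ ∫ τ in a..b, energyRate γ D (timeDeriv u τ) :=
    intervalIntegral.integral_nonneg_of_forall hab fun τ => energyRate_nonneg γ D _
  constructor <;> linarith

/-- **Energy identity.** For a positive classical solution `u` of the pseudo-parabolic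
problem and `𝓕(t) := −(1/2)∫_D |∇_γ u(t)|² + ∫_D (F(u(t)) − θ)`, one has
`𝓕(t) = 𝓕(0) + ∫₀ᵗ ∫_D (u_τ² + |∇_γ u_τ|²)`; in particular `𝓕` is non-decreasing. -/
theorem grushin_energy_identity
    (m k : ℕ) (hm : 1 ≤ m) (hk : 1 ≤ k) (γ : ℝ) (hγ : 0 ≤ γ)
    (D : Set (GS m k)) (hD : GoodDomain m k D) (hDiv : SupportsDivFormula γ D)
    (f : ℝ → ℝ) (hf : GoodNonlinearity f) (θ : ℝ)
    (u₀ : GS m k → ℝ) (T : ℝ≥0∞) (hT : 0 < T) (u : ℝ → GS m k → ℝ)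
    (hu : IsPosSolution γ D f u₀ T u) :
    (∀ t : ℝ, 0 ≤ t → ENNReal.ofReal t < T →
      (-(1 / 2) * (∫ z in D, gradSqG γ (u t) z) + ∫ z in D, (Fprim f (u t z) - θ))
        = (-(1 / 2) * (∫ z in D, gradSqG γ (u 0) z) + ∫ z in D, (Fprim f (u 0 z) - θ))
          + ∫ τ in (0 : ℝ)..t, ∫ z in D,
              ((deriv (fun s => u s z) τ) ^ 2
                + gradSqG γ (fun w => deriv (fun s => u s w) τ) z)) ∧
    (∀ t₁ t₂ : ℝ, 0 ≤ t₁ → t₁ ≤ t₂ → ENNReal.ofReal t₂ < T →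
      (-(1 / 2) * (∫ z in D, gradSqG γ (u t₁) z) + ∫ z in D, (Fprim f (u t₁ z) - θ))
        ≤ -(1 / 2) * (∫ z in D, gradSqG γ (u t₂) z) + ∫ z in D, (Fprim f (u t₂ z) - θ)) := by
  have on_interval {a b : ℝ} (ha : 0 ≤ a) (hab : a ≤ b) (hb : ENNReal.ofReal b < T) :=
    grushin_energy_identity_general hγ hD.isOpen.measurableSet hD.isBounded hDiv
      hf.locallyLipschitz.continuous θ hab (hu.isSmoothSolutionOn_Ioo ha hb)
  exact ⟨fun t ht htT => (on_interval le_rfl ht htT).1,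
    fun t₁ t₂ ht₁ h₁₂ ht₂ => (on_interval ht₁ h₁₂ ht₂).2⟩

end
end
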